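/- Compactness fails over weakly Stalnakerian selection frames: let (A_i)_{i∈ℕ} be pairwise distinct 0-place predicates and let Γ = {◇A_i : i ∈ ℕ} ∪ {(A_i ∨ A_{i+1}) > ¬A_i : i ∈ ℕ}, where ◇χ := ¬(χ > ⊥). Then every finite subset of Γ is satisfied at some world of some selection model based on a Stalnakerian selection frame, but no world of any selection model based on a weakly Stalnakerian selection frame satisfies all of Γ (under any variable assignment). -/

import Mathlib

/-!
In a weakly Stalnakerian frame the selection function acts on all sets of worlds, in particular on
the union `B` of the sets `[A_i]`, which no formula need define. If `f(B,w)` is empty, Uniformity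
forces `f([A_0],w)` to be empty, against `◇A_0`. If `f(B,w)` contains some `v ∈ [A_i]`, then by
Uniqueness `f(B,w) ⊆ [A_i] ∪ [A_{i+1}]`, so by Uniformity `v ∈ f([A_i ∨ A_{i+1}],w)`, against
`(A_i ∨ A_{i+1}) > ¬A_i`.

A finite part of `Γ` mentions only indices below some `N`. Take the natural numbers as worlds, let
the selection function pick the closest world, with the world of evaluation closest and the others
in their usual order, and let `A_i` hold exactly at the world `N - i` for `i ≤ N`. Then at world `0`
the closest `A_i ∨ A_{i+1}`-world is the `A_{i+1}`-world `N - i - 1`.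
-/

universe u

/-- Formulas of the language `L` of quantified conditional logic:
atomic formulas `P^n_p(x_1,…,x_n)` (with variables coded by naturals),
negation, material implication, the conditional `>`, and universal
quantification. -/
inductive Formula : Type where
  | atom : (n : ℕ) → ℕ → (Fin n → ℕ) → Formula
  | neg : Formula → Formula
  | imp : Formula → Formula → Formula
  | cond : Formula → Formula → Formula
  | all : ℕ → Formula → Formula

namespace Formula

/-- `⊤`, defined classically. -/
def top : Formula := imp (atom 0 0 Fin.elim0) (atom 0 0 Fin.elim0)
/-- `⊥`, defined classically. -/
def bot : Formula := neg top
/-- Conjunction, defined classically. -/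
def land (φ ψ : Formula) : Formula := neg (imp φ (neg ψ))
/-- Disjunction, defined classically. -/
def lor (φ ψ : Formula) : Formula := imp (neg φ) ψ
/-- Biconditional `≡`, defined classically. -/
def biimp (φ ψ : Formula) : Formula := land (imp φ ψ) (imp ψ φ)
/-- Existential quantification, defined classically. -/
def ex (x : ℕ) (φ : Formula) : Formula := neg (all x (neg φ))
/-- `◇φ := ¬(φ > ⊥)`. -/
def dia (φ : Formula) : Formula := neg (cond φ bot)
/-- `□φ := ¬φ > ⊥`. -/
def box (φ : Formula) : Formula := cond (neg φ) bot

/-- The free variables of a formula. -/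
def freeVars : Formula → Finset ℕ
  | atom _ _ a => Finset.image a Finset.univ
  | neg φ => freeVars φ
  | imp φ ψ => freeVars φ ∪ freeVars ψ
  | cond φ ψ => freeVars φ ∪ freeVars ψ
  | all x φ => freeVars φ \ {x}

/-- Capture-avoiding simultaneous substitution of variables (bound variables
are renamed as needed). -/
def substV (σ : ℕ → ℕ) : Formula → Formula
  | atom n p a => atom n p fun i => σ (a i)
  | neg φ => neg (substV σ φ)
  | imp φ ψ => imp (substV σ φ) (substV σ ψ)
  | cond φ ψ => cond (substV σ φ) (substV σ ψ)
  | all x φ =>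
      let img := ((freeVars φ).erase x).image σ
      let x' := if x ∈ img then img.sup id + 1 else x
      all x' (substV (Function.update σ x x') φ)

end Formula

/-- `subst1 x y φ` is `φ[y/x]`: the capture-avoiding substitution of the
variable `y` for all free occurrences of the variable `x` in `φ`. -/
def subst1 (x y : ℕ) (φ : Formula) : Formula :=
  Formula.substV (Function.update id x y) φ

/-- `φ` is a substitution instance of a propositional tautology: every
Boolean valuation of formulas commuting with `¬` and `⊃` makes `φ` true. -/
def IsTautInstance (φ : Formula) : Prop :=
  ∀ v : Formula → Bool,
    (∀ ψ, v (Formula.neg ψ) = !(v ψ)) →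
    (∀ ψ χ, v (Formula.imp ψ χ) = (!(v ψ) || v χ)) →
    v φ = true

/-- `conjs ψ l` is the conjunction `ψ ∧ ⋯` of `ψ` followed by the formulas
in `l`. -/
def conjs : Formula → List Formula → Formula
  | φ, [] => φ
  | φ, ψ :: l => Formula.land φ (conjs ψ l)

/-- The logic `QC2`: the smallest set of `L`-formulas containing all
substitution instances of propositional tautologies, (ID), (CSO), (Cen),
(CEM), (UI), and (C∀), and closed under modus ponens, the conditional
consequence rule, and universal generalization. -/
inductive QC2 : Formula → Prop where
  | taut {φ} : IsTautInstance φ → QC2 φ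
  | id (φ) : QC2 (Formula.cond φ φ)
  | cso (φ ψ χ) :
      QC2 (.imp (.land (.cond φ ψ) (.land (.cond ψ φ) (.cond φ χ))) (.cond ψ χ))
  | cen (φ ψ) : QC2 (.imp (.cond φ ψ) (.imp φ ψ))
  | cem (φ ψ) : QC2 (.lor (.cond φ ψ) (.cond φ (.neg ψ)))
  | ui (x y : ℕ) (φ) : QC2 (.imp (.all x φ) (subst1 x y φ))
  | callax (x : ℕ) (φ ψ) (h : x ∉ φ.freeVars) :
      QC2 (.imp (.all x (.cond φ ψ)) (.cond φ (.all x ψ)))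
  | mp {φ ψ} : QC2 (.imp φ ψ) → QC2 φ → QC2 ψ
  | crule {φ χ ψ : Formula} {l : List Formula} :
      QC2 (.imp (conjs ψ l) χ) →
      QC2 (.imp (conjs (.cond φ ψ) (l.map (.cond φ))) (.cond φ χ))
  | gen {ψ : Formula} {x y : ℕ} {φ : Formula} :
      y ∉ ψ.freeVars → y ∉ (Formula.all x φ).freeVars →
      QC2 (.imp ψ (subst1 x y φ)) → QC2 (.imp ψ (.all x φ))

/-- A selection frame `(W, R, f, D, d)`. -/
structure SelFrame : Type (u + 1) where
  W : Type u
  Wne : Nonempty W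
  R : W → W → Prop
  f : Set W → W → Set W
  D : Type u
  Dne : Nonempty D
  d : W → Set D
  f_sub : ∀ P w, f P w ⊆ {v | R w v}

/-- A selection model based on a selection frame: an interpretation assigning
to each `n`-place predicate and world a set of `n`-tuples from `D`. -/
structure SelModel (F : SelFrame.{u}) : Type u where
  I : (n : ℕ) → ℕ → F.W → Set (Fin n → F.D)

/-- Satisfaction `M,w,g ⊨ φ` in a selection model. -/
def Sat {F : SelFrame.{u}} (M : SelModel F) : Formula → F.W → (ℕ → F.D) → Prop
  | .atom n p a, w, g => (fun i => g (a i)) ∈ M.I n p w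
  | .neg φ, w, g => ¬ Sat M φ w g
  | .imp φ ψ, w, g => Sat M φ w g → Sat M ψ w g
  | .cond φ ψ, w, g => F.f {v | Sat M φ v g} w ⊆ {v | Sat M ψ v g}
  | .all x φ, w, g => ∀ a ∈ F.d w, Sat M φ w (Function.update g x a)

/-- A formula is valid in a selection frame if it holds at every world under
every assignment in every model based on that frame. -/
def FrameValid (F : SelFrame.{u}) (φ : Formula) : Prop :=
  ∀ (M : SelModel F) (w : F.W) (g : ℕ → F.D), Sat M φ w g

namespace SelFrame

variable (F : SelFrame.{u})

/-- (Success) `f(P,w) ⊆ P`. -/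
def Success : Prop := ∀ P w, F.f P w ⊆ P
/-- (Weak Centering) `w ∈ P` implies `w ∈ f(P,w)`. -/
def WeakCentering : Prop := ∀ P w, w ∈ P → w ∈ F.f P w
/-- (Uniformity) if `f(P,w) ⊆ Q` and `f(Q,w) ⊆ P` then `f(P,w) = f(Q,w)`. -/
def Uniformity : Prop := ∀ P Q w, F.f P w ⊆ Q → F.f Q w ⊆ P → F.f P w = F.f Q w
/-- (Uniqueness) `f(P,w)` has at most one element. -/
def Uniqueness : Prop := ∀ P w, (F.f P w).Subsingleton
/-- (LA) if `f(P,w) = ∅` then `P ∩ R(w) = ∅`. -/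
def LA : Prop := ∀ P w, F.f P w = ∅ → P ∩ {v | F.R w v} = ∅
/-- (WLA) if `f(P,w) = ∅` then `P ∩ f(Q,w) = ∅`. -/
def WLA : Prop := ∀ P Q w, F.f P w = ∅ → P ∩ F.f Q w = ∅
/-- (Rational Monotonicity) if `P ⊆ Q` and `f(Q,w) ∩ P ≠ ∅` then
`f(P,w) = f(Q,w) ∩ P`. -/
def RatMono : Prop := ∀ P Q w, P ⊆ Q → F.f Q w ∩ P ≠ ∅ → F.f P w = F.f Q w ∩ P
/-- A selection frame is weakly Stalnakerian if it satisfies Success, Weak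
Centering, Uniformity, and Uniqueness. -/
def WeaklyStalnakerian : Prop :=
  F.Success ∧ F.WeakCentering ∧ F.Uniformity ∧ F.Uniqueness
/-- A selection frame is Stalnakerian if it satisfies Success, Weak
Centering, LA, Uniformity, and Uniqueness. -/
def Stalnakerian : Prop :=
  F.Success ∧ F.WeakCentering ∧ F.LA ∧ F.Uniformity ∧ F.Uniqueness
/-- A selection frame is globally constant if `d(w) = D` for all `w`. -/
def GloballyConstant : Prop := ∀ w, F.d w = Set.univ

end SelFrame

/-- `F(x)`: the fixed 1-place predicate (index 0) applied to variable `x`. -/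
def Fp (x : ℕ) : Formula := .atom 1 0 fun _ => x

/-- The sentence `DS := ∃x⊤ ∧ ∀x ◇F(x) ∧ ∀x∃y((F(x) ∨ F(y)) > ¬F(x))`. -/
def DS : Formula :=
  .land (.ex 0 .top)
    (.land (.all 0 (.dia (Fp 0)))
      (.all 0 (.ex 1 (.cond (.lor (Fp 0) (Fp 1)) (.neg (Fp 0))))))

/-- `A_i`: pairwise distinct 0-place predicates serving as propositional
atoms. -/
def Ap (i : ℕ) : Formula := .atom 0 i Fin.elim0

/-- `Γ = {◇A_i : i ∈ ℕ} ∪ {(A_i ∨ A_{i+1}) > ¬A_i : i ∈ ℕ}`. -/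
def Gamma : Set Formula :=
  {φ | ∃ i : ℕ, φ = .dia (Ap i)} ∪
    {φ | ∃ i : ℕ, φ = .cond (.lor (Ap i) (Ap (i + 1))) (.neg (Ap i))}

/-- The rank of `v` in the similarity order around `w`: `w` itself comes first, and all other
natural numbers follow in their usual order. -/
def simRank (w v : ULift.{u} ℕ) : ℕ := if v = w then 0 else v.down + 1

lemma simRank_injective (w : ULift.{u} ℕ) : Function.Injective (simRank w) := by
  intro a b h
  unfold simRank at h
  split_ifs at h with h1 h2
  · rw [h1, h2]
  · exact ULift.ext _ _ (by omega)

/-- The selection frame on the natural numbers, with universal accessibility, that selects the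
`simRank`-closest world of a proposition. The domain is a singleton. -/
abbrev natFrame : SelFrame.{u} where
  W := ULift ℕ
  Wne := ⟨⟨0⟩⟩
  R := fun _ _ => True
  f := fun P w => {v | v ∈ P ∧ ∀ x ∈ P, simRank w v ≤ simRank w x}
  D := PUnit
  Dne := ⟨⟨⟩⟩
  d := fun _ => Set.univ
  f_sub := fun _ _ _ _ => trivial

lemma natFrame_f_nonempty (P : Set (ULift.{u} ℕ)) (w v : ULift.{u} ℕ) (hv : v ∈ P) :
    ∃ m ∈ P, ∀ x ∈ P, simRank w m ≤ simRank w x := by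
  obtain ⟨m, hm, hmin⟩ := (measure (simRank w)).wf.has_min P ⟨v, hv⟩
  exact ⟨m, hm, fun x hx => not_lt.mp (hmin x hx)⟩

lemma natFrame_f_subset (P Q : Set (ULift.{u} ℕ)) (w : ULift.{u} ℕ)
    (hPQ : natFrame.f P w ⊆ Q) (hQP : natFrame.f Q w ⊆ P) :
    natFrame.f P w ⊆ natFrame.f Q w := by
  intro v hv
  refine ⟨hPQ hv, fun x hx => ?_⟩
  obtain ⟨m, hm, hmin⟩ := natFrame_f_nonempty Q w x hx
  exact (hv.2 m (hQP ⟨hm, hmin⟩)).trans (hmin x hx)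

lemma natFrame_stalnakerian : natFrame.{u}.Stalnakerian := by
  refine ⟨fun P w v hv => hv.1, fun P w hw => ⟨hw, fun x _ => ?_⟩, fun P w h => ?_,
    fun P Q w hPQ hQP => ?_, fun P w a ha b hb => ?_⟩
  · exact (if_pos rfl : simRank w w = 0).le.trans (Nat.zero_le _)
  · rw [Set.eq_empty_iff_forall_notMem] at h ⊢
    rintro v ⟨hv, -⟩
    obtain ⟨m, hm, hmin⟩ := natFrame_f_nonempty P w v hv
    exact h m ⟨hm, hmin⟩
  · exact (natFrame_f_subset P Q w hPQ hQP).antisymm (natFrame_f_subset Q P w hQP hPQ)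
  · exact simRank_injective w (le_antisymm (ha.2 b hb.1) (hb.2 a ha.1))

/-- The model in which, for `i ≤ N`, the atom `A_i` holds exactly at the world `N - i`, while
`A_i` holds nowhere for `i > N`. -/
def natModel (N : ℕ) : SelModel natFrame.{u} where
  I := fun _ i w => {_a | i + (w : ULift.{u} ℕ).down = N}

lemma sat_natModel_Ap (N i : ℕ) (w : ULift.{u} ℕ) (g : ℕ → natFrame.{u}.D) :
    Sat (natModel N) (Ap i) w g ↔ i + w.down = N := Iff.rfl

lemma not_sat_bot {F : SelFrame.{u}} (M : SelModel F) (w : F.W) (g : ℕ → F.D) :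
    ¬ Sat M Formula.bot w g := by
  simp [Formula.bot, Formula.top, Sat]

lemma sat_dia_iff {F : SelFrame.{u}} (M : SelModel F) (φ : Formula) (w : F.W) (g : ℕ → F.D) :
    Sat M (.dia φ) w g ↔ (F.f {v | Sat M φ v g} w).Nonempty := by
  simp only [Formula.dia, Sat, not_sat_bot, Set.ofPred_false, Set.subset_empty_iff,
    Set.nonempty_iff_ne_empty, ne_eq]

lemma sat_lor_iff {F : SelFrame.{u}} (M : SelModel F) (φ ψ : Formula) (w : F.W) (g : ℕ → F.D) :
    Sat M (.lor φ ψ) w g ↔ Sat M φ w g ∨ Sat M ψ w g := by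
  simp only [Formula.lor, Sat, or_iff_not_imp_left]

lemma sat_natModel_dia (N i : ℕ) (hi : i < N) (g : ℕ → natFrame.{u}.D) :
    Sat (natModel N) (.dia (Ap i)) (⟨0⟩ : ULift.{u} ℕ) g := by
  refine (sat_dia_iff _ _ _ _).2 ?_
  have h : (⟨N - i⟩ : ULift.{u} ℕ) ∈ {v : ULift.{u} ℕ | Sat (natModel N) (Ap i) v g} := by
    change i + (N - i) = N
    omega
  obtain ⟨m, hm, hmin⟩ := natFrame_f_nonempty _ ⟨0⟩ _ h
  exact ⟨m, hm, hmin⟩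

lemma sat_natModel_cond (N i : ℕ) (hi : i < N) (g : ℕ → natFrame.{u}.D) :
    Sat (natModel N) (.cond (.lor (Ap i) (Ap (i + 1))) (.neg (Ap i))) (⟨0⟩ : ULift.{u} ℕ) g := by
  rintro v ⟨-, hmin⟩ hv
  have hv' : i + (v : ULift.{u} ℕ).down = N := hv
  -- The `A_{i+1}`-world `N - (i + 1)` would be at least as far from `0` as the `A_i`-world `v`.
  have h := hmin (⟨N - (i + 1)⟩ : ULift.{u} ℕ) <| (sat_lor_iff _ _ _ _ _).2 <| Or.inr <| by
    change i + 1 + (N - (i + 1)) = N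
    omega
  have hv0 : v ≠ (⟨0⟩ : ULift.{u} ℕ) := by
    rintro rfl
    simp only at hv'
    omega
  unfold simRank at h
  rw [if_neg hv0] at h
  split_ifs at h
  · omega
  · change (v : ULift.{u} ℕ).down + 1 ≤ N - (i + 1) + 1 at h
    omega

/-- Compactness fails over weakly Stalnakerian selection
frames: every finite subset of `Γ` is satisfied at some world of some
selection model based on a Stalnakerian selection frame, but no world of any
selection model based on a weakly Stalnakerian selection frame satisfies all
of `Γ` (under any variable assignment). -/
theorem compactness_fails_weakly_stalnakerian :
    (∀ Γ₀ : Set Formula, Γ₀ ⊆ Gamma → Γ₀.Finite →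
      ∃ (F : SelFrame.{u}) (_ : F.Stalnakerian) (M : SelModel F) (w : F.W)
        (g : ℕ → F.D), ∀ φ ∈ Γ₀, Sat M φ w g) ∧
    (∀ (F : SelFrame.{u}), F.WeaklyStalnakerian →
      ∀ (M : SelModel F) (w : F.W) (g : ℕ → F.D), ¬ ∀ φ ∈ Gamma, Sat M φ w g) := by
  refine ⟨fun Γ₀ hsub hfin => ?_, fun F ⟨hS, _, hU, h1⟩ M w g hΓ => ?_⟩
  · have hidx : ∀ φ : Γ₀, ∃ i : ℕ, φ.1 = .dia (Ap i) ∨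
        φ.1 = .cond (.lor (Ap i) (Ap (i + 1))) (.neg (Ap i)) := by
      rintro ⟨φ, hφ⟩
      rcases hsub hφ with ⟨i, hi⟩ | ⟨i, hi⟩
      · exact ⟨i, Or.inl hi⟩
      · exact ⟨i, Or.inr hi⟩
    choose ix hix using hidx
    have : Finite Γ₀ := hfin
    obtain ⟨N, hN⟩ := (Set.finite_range ix).bddAbove
    refine ⟨natFrame, natFrame_stalnakerian, natModel (N + 1), (⟨0⟩ : ULift.{u} ℕ),
      fun _ => PUnit.unit, fun φ hφ => ?_⟩
    have hlt : ix ⟨φ, hφ⟩ < N + 1 := Nat.lt_succ_of_le (hN ⟨_, rfl⟩)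
    rcases hix ⟨φ, hφ⟩ with h | h
    · change φ = _ at h
      rw [h]
      exact sat_natModel_dia _ _ hlt _
    · change φ = _ at h
      rw [h]
      exact sat_natModel_cond _ _ hlt _
  · let A : ℕ → Set F.W := fun i => {v | Sat M (Ap i) v g}
    have hdia : ∀ i, (F.f (A i) w).Nonempty := fun i =>
      (sat_dia_iff M _ w g).1 (hΓ _ (Or.inl ⟨i, rfl⟩))
    have hcond : ∀ i, ∀ v ∈ F.f (A i ∪ A (i + 1)) w, v ∉ A i := by
      intro i v hv
      have heq : A i ∪ A (i + 1) = {v | Sat M (.lor (Ap i) (Ap (i + 1))) v g} :=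
        Set.ext fun x => (sat_lor_iff M _ _ x g).symm
      rw [heq] at hv
      exact hΓ _ (Or.inr ⟨i, rfl⟩) hv
    have hA : ∀ i, A i ⊆ ⋃ j, A j := fun i => Set.subset_iUnion A i
    rcases (F.f (⋃ j, A j) w).eq_empty_or_nonempty with he | ⟨v, hv⟩
    · have h := hU (⋃ j, A j) (A 0) w (by rw [he]; exact Set.empty_subset _)
        ((hS _ _).trans (hA 0))
      exact (hdia 0).ne_empty (h.symm.trans he)
    · obtain ⟨i, hi⟩ := Set.mem_iUnion.1 (hS _ _ hv)
      have h := hU (⋃ j, A j) (A i ∪ A (i + 1)) w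
        (fun x hx => h1 _ _ hv hx ▸ Or.inl hi)
        ((hS _ _).trans (Set.union_subset (hA i) (hA (i + 1))))
      exact hcond i v (h ▸ hv) hi
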